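/- Let F be a field, L a Lie algebra over F, and J a Lie ideal of L. Let W ⊆ J be a subset such that J is generated as a Lie subalgebra of L by W and such that the canonical Lie algebra homomorphism from the free Lie algebra FreeLie_F(W) to L, sending each generator to the corresponding element of W, is injective with range J (so that J is a free Lie algebra on W). Let A = U(L) be the universal enveloping algebra of L with canonical map ι : L → A, and let I be the two-sided ideal of A generated by ι(J). Then the multiplication map ⊕_{w ∈ W} A → I, (a_w)_{w} ↦ Σ_w a_w·ι(w), is an isomorphism of left A-modules, and the multiplication map ⊕_{w ∈ W} A → I, (a_w)_{w} ↦ Σ_w ι(w)·a_w, is an isomorphism of right A-modules; i.e. I is free as a left A-module and as a right A-module on the basis ι(W). -/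

import Mathlib

/-!
The Poincaré–Birkhoff–Witt theorem for a Lie algebra with a basis is Bergman's diamond lemma:
words in the basis are rewritten at their descents, and the one overlap which needs an argument,
three consecutive decreasing letters, is resolved by the Jacobi identity.

A basis of `L` which extends a basis of `J`, with the letters of `J` first, turns the PBW basis of
`U(L)` into a basis over `U(J)`. When `J` is free on `W`, `U(J)` is the free associative algebra on
`W`, where `∑ w * a_w = 0` forces all `a_w = 0`; freeness of `U(L)` over `U(J)` carries this over to
coefficients in `U(L)`, and the principal anti-automorphism exchanges the two sides. Finally,
`ι(y) * ι(x) = ι(x) * ι(y) + ι ⁅y, x⁆`, so the left ideal generated by `W` is stable under right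
multiplication because `J` is a Lie ideal generated by `W`.
-/

open Module UniversalEnvelopingAlgebra

namespace PoincareBirkhoffWitt

attribute [local instance] LieRing.ofAssociativeRing

/-! ### The Poincaré–Birkhoff–Witt theorem -/

section

variable {R L I : Type*} [CommRing R] [LieRing L] [LieAlgebra R L]

variable (R) in
/-- The relation `x ⊗ y - y ⊗ x - ⁅x, y⁆` imposed on the tensor algebra to obtain the universal
enveloping algebra, as a bilinear map. -/
noncomputable def commRel : L →ₗ[R] L →ₗ[R] TensorAlgebra R L :=
  (LinearMap.mul R (TensorAlgebra R L)).compl₁₂ (TensorAlgebra.ι R) (TensorAlgebra.ι R) -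
    (LinearMap.mul R (TensorAlgebra R L)).flip.compl₁₂ (TensorAlgebra.ι R) (TensorAlgebra.ι R) -
    (LieModule.toEnd R L L : L →ₗ[R] L →ₗ[R] L).compr₂ (TensorAlgebra.ι R)

lemma commRel_apply (x y : L) :
    commRel R x y = TensorAlgebra.ι R x * TensorAlgebra.ι R y -
      TensorAlgebra.ι R y * TensorAlgebra.ι R x - TensorAlgebra.ι R ⁅x, y⁆ := by
  simp [commRel]

lemma commRel_self (x : L) : commRel R x x = 0 := by simp [commRel_apply]

lemma commRel_swap (x y : L) : commRel R y x = -commRel R x y := by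
  rw [commRel_apply, commRel_apply, ← lie_skew x y, map_neg]
  abel

lemma mkAlgHom_commRel (x y : L) : mkAlgHom R L (commRel R x y) = 0 := by
  rw [commRel_apply, map_sub, map_sub, map_mul, map_mul]
  simp only [← ι_apply, LieHom.map_lie, LieRing.of_associative_ring_bracket, sub_self]

lemma commRel_jacobi (x y z : L) :
    commRel R x y * TensorAlgebra.ι R z - TensorAlgebra.ι R x * commRel R y z =
      TensorAlgebra.ι R z * commRel R x y - commRel R y z * TensorAlgebra.ι R x +
        (commRel R x z * TensorAlgebra.ι R y - TensorAlgebra.ι R y * commRel R x z) -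
        commRel R ⁅x, y⁆ z - commRel R ⁅y, z⁆ x + commRel R ⁅x, z⁆ y := by
  have jacobi : TensorAlgebra.ι R ⁅⁅x, z⁆, y⁆ =
      TensorAlgebra.ι R ⁅⁅x, y⁆, z⁆ + TensorAlgebra.ι R ⁅⁅y, z⁆, x⁆ := by
    rw [← map_add, lie_lie x z y, ← lie_skew ⁅x, y⁆ z, ← lie_skew ⁅y, z⁆ x, ← lie_skew y z]
    congr 1
    rw [lie_neg]
    abel
  simp only [commRel_apply, jacobi]
  noncomm_ring

lemma map_mem_of_forall_basis {M N : Type*} [AddCommMonoid M] [Module R M] [AddCommMonoid N]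
    [Module R N] (b : Basis I R M) (f : M →ₗ[R] N) {S : Submodule R N} (h : ∀ i, f (b i) ∈ S)
    (x : M) : f x ∈ S := by
  have hle : Submodule.span R (Set.range b) ≤ S.comap f :=
    Submodule.span_le.2 (Set.range_subset_iff.2 h)
  exact hle (b.mem_span x)

variable (b : Basis I R L)

/-- The product in the tensor algebra of the basis vectors indexed by the letters of a word. -/
noncomputable def word (l : List I) : TensorAlgebra R L :=
  (l.map fun i => TensorAlgebra.ι R (b i)).prod

@[simp]
lemma word_nil : word b [] = 1 := rfl

@[simp]
lemma word_cons (i : I) (l : List I) : word b (i :: l) = TensorAlgebra.ι R (b i) * word b l := by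
  simp [word]

@[simp]
lemma word_append (u v : List I) : word b (u ++ v) = word b u * word b v := by
  simp [word]

lemma tensorAlgebra_basis_apply (l : FreeMonoid I) : b.tensorAlgebra l = word b l.toList := by
  simp [Basis.tensorAlgebra, FreeAlgebra.basisFreeMonoid, FreeAlgebra.equivMonoidAlgebraFreeMonoid,
    FreeMonoid.lift_apply, map_list_prod, word, Function.comp_def]

lemma mkAlgHom_word (l : List I) : mkAlgHom R L (word b l) = (l.map fun i => ι R (b i)).prod := by
  simp [word, map_list_prod, Function.comp_def]

lemma mkAlgHom_surjective : Function.Surjective (mkAlgHom R L) := RingCon.mkₐ_surjective _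

end

section

variable {I : Type*} [LinearOrder I]

/-- A place where two consecutive letters of the word `l` are in the wrong order. -/
structure Descent (l : List I) where
  left : List I
  fst : I
  snd : I
  right : List I
  snd_lt_fst : snd < fst
  eq_append : left ++ fst :: snd :: right = l

lemma isEmpty_descent_iff {l : List I} : IsEmpty (Descent l) ↔ l.Pairwise (· ≤ ·) := by
  rw [← List.isChain_iff_pairwise, List.isChain_iff_forall_rel_of_append_cons_cons]
  refine ⟨fun h j k u v hl => ?_, fun h => ⟨fun d => ?_⟩⟩
  · exact not_lt.1 fun hkj => h.elim ⟨u, j, k, v, hkj, hl.symm⟩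
  · exact (h d.eq_append.symm).not_gt d.snd_lt_fst

lemma shortlex_append_cons_cons (u v w : List I) {i j k : I} (h : i < j)
    (hlen : v.length = w.length + 1) :
    List.Shortlex (· < ·) (u ++ i :: v) (u ++ j :: k :: w) :=
  .append_left (.of_lex (by simp [hlen]) (.rel h)) u

lemma Descent.shortlex_swap {l : List I} (d : Descent l) :
    List.Shortlex (· < ·) (d.left ++ d.snd :: d.fst :: d.right) l := by
  obtain ⟨u, j, k, v, hkj, rfl⟩ := d
  exact shortlex_append_cons_cons u (j :: v) v hkj (by simp)

lemma Descent.shortlex_contract {l : List I} (d : Descent l) (i : I) :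
    List.Shortlex (· < ·) (d.left ++ i :: d.right) l := by
  obtain ⟨u, j, k, v, hkj, rfl⟩ := d
  exact .of_length_lt (by simp)

variable {R L : Type*} [CommRing R] [LieRing L] [LieAlgebra R L]

lemma map_commRel_mem {M : Type*} [AddCommGroup M] [Module R M] (b : Basis I R L)
    (f : TensorAlgebra R L →ₗ[R] M) {S : Submodule R M}
    (h : ∀ j k, k < j → f (commRel R (b j) (b k)) ∈ S) (x y : L) : f (commRel R x y) ∈ S := by
  have basis_left (j : I) : f (commRel R (b j) y) ∈ S := by
    refine map_mem_of_forall_basis b (f ∘ₗ commRel R (b j)) (fun k => ?_) y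
    rcases lt_trichotomy j k with hjk | rfl | hkj
    · simpa [commRel_swap (b k)] using S.neg_mem (h k j hjk)
    · simp [commRel_self]
    · exact h j k hkj
  exact map_mem_of_forall_basis b (f ∘ₗ (commRel R).flip y) basis_left x

variable (b : Basis I R L)

/-- The multiple of a defining relation of the universal enveloping algebra which rewrites the
word `l` at the descent `d`. -/
noncomputable def Descent.relation {l : List I} (d : Descent l) : TensorAlgebra R L :=
  word b d.left * commRel R (b d.fst) (b d.snd) * word b d.right

lemma Descent.relation_eq_sub {l : List I} (d : Descent l) :
    d.relation b = word b l - (word b (d.left ++ d.snd :: d.fst :: d.right) +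
      Finsupp.linearCombination R (fun i => word b (d.left ++ i :: d.right))
        (b.repr ⁅b d.fst, b d.snd⁆)) := by
  have contract (x : L) : Finsupp.linearCombination R (fun i => word b (d.left ++ i :: d.right))
      (b.repr x) = word b d.left * TensorAlgebra.ι R x * word b d.right := by
    refine LinearMap.congr_fun (f := Finsupp.linearCombination R _ ∘ₗ b.repr.toLinearMap)
      (g := LinearMap.mulRight R (word b d.right) ∘ₗ LinearMap.mulLeft R (word b d.left) ∘ₗ
        TensorAlgebra.ι R) (b.ext fun i => ?_) x
    simp [mul_assoc]
  rw [contract, ← congrArg (word b) d.eq_append, Descent.relation, commRel_apply]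
  simp only [word_append, word_cons]
  noncomm_ring

/-- The span of the relations which rewrite words smaller than `l` in the shortlex order. -/
def relBelow (l : List I) : Submodule R (TensorAlgebra R L) :=
  Submodule.span R {t | ∃ l', List.Shortlex (· < ·) l' l ∧ ∃ d : Descent l', d.relation b = t}

variable {b} in
lemma word_mul_commRel_mul_word_mem_relBelow {u v l : List I} {j k : I} (hkj : k < j)
    (hl : List.Shortlex (· < ·) (u ++ j :: k :: v) l) :
    word b u * commRel R (b j) (b k) * word b v ∈ relBelow b l :=
  Submodule.subset_span ⟨_, hl, ⟨u, j, k, v, hkj, rfl⟩, rfl⟩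

variable {b} in
lemma commRel_mem_relBelow_of_length_lt {u v l : List I}
    (hl : u.length + v.length + 2 < l.length) (x y : L) :
    word b u * commRel R x y * word b v ∈ relBelow b l :=
  map_commRel_mem b (LinearMap.mulRight R (word b v) ∘ₗ LinearMap.mulLeft R (word b u))
    (fun _ _ hkj => word_mul_commRel_mul_word_mem_relBelow hkj
      (.of_length_lt (by simp; omega))) x y

lemma overlapping_descents_sub_mem_relBelow (u v : List I) {i j k : I} (hji : j < i) (hkj : k < j) :
    word b u * commRel R (b i) (b j) * word b (k :: v) -
      word b (u ++ [i]) * commRel R (b j) (b k) * word b v ∈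
        relBelow b (u ++ i :: j :: k :: v) := by
  have expand : word b u * commRel R (b i) (b j) * word b (k :: v) -
      word b (u ++ [i]) * commRel R (b j) (b k) * word b v =
        word b (u ++ [k]) * commRel R (b i) (b j) * word b v -
        word b u * commRel R (b j) (b k) * word b (i :: v) +
        (word b u * commRel R (b i) (b k) * word b (j :: v) -
        word b (u ++ [j]) * commRel R (b i) (b k) * word b v) -
        word b u * commRel R ⁅b i, b j⁆ (b k) * word b v -
        word b u * commRel R ⁅b j, b k⁆ (b i) * word b v +
        word b u * commRel R ⁅b i, b k⁆ (b j) * word b v := by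
    have jacobi := congr(word b u * $(commRel_jacobi (R := R) (b i) (b j) (b k)) * word b v)
    simp only [word_append, word_cons, word_nil, mul_one]
    simp only [mul_add, mul_sub, add_mul, sub_mul, mul_assoc] at jacobi ⊢
    exact jacobi
  have below {u' v' : List I} {p q : I} (hqp : q < p)
      (hl : List.Shortlex (· < ·) (u' ++ p :: q :: v') (u ++ i :: j :: k :: v)) :
      word b u' * commRel R (b p) (b q) * word b v' ∈ relBelow b (u ++ i :: j :: k :: v) :=
    word_mul_commRel_mul_word_mem_relBelow hqp hl
  have short (x y : L) : word b u * commRel R x y * word b v ∈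
      relBelow b (u ++ i :: j :: k :: v) :=
    commRel_mem_relBelow_of_length_lt (by simp; omega) x y
  rw [expand]
  refine add_mem (sub_mem (sub_mem (add_mem (sub_mem ?_ ?_) (sub_mem ?_ ?_)) (short _ _))
    (short _ _)) (short _ _)
  · exact below hji (by simpa using shortlex_append_cons_cons u _ _ (hkj.trans hji) (by simp))
  · exact below hkj (shortlex_append_cons_cons u _ _ hji (by simp))
  · exact below (hkj.trans hji)
      (by simpa using shortlex_append_cons_cons (u ++ [i]) (j :: v) v hkj (by simp))
  · exact below (hkj.trans hji) (by simpa using shortlex_append_cons_cons u _ _ hji (by simp))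

lemma disjoint_descents_sub_mem_relBelow (u m v : List I) {j k p q : I} (hkj : k < j)
    (hqp : q < p) :
    word b u * commRel R (b j) (b k) * word b (m ++ p :: q :: v) -
      word b (u ++ j :: k :: m) * commRel R (b p) (b q) * word b v ∈
        relBelow b (u ++ j :: k :: (m ++ p :: q :: v)) := by
  have expand : word b u * commRel R (b j) (b k) * word b (m ++ p :: q :: v) -
      word b (u ++ j :: k :: m) * commRel R (b p) (b q) * word b v =
        word b u * commRel R (b j) (b k) * word b (m ++ q :: p :: v) +
        word b u * commRel R (b j) (b k) * (word b m * TensorAlgebra.ι R ⁅b p, b q⁆ * word b v) -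
        (word b (u ++ k :: j :: m) * commRel R (b p) (b q) * word b v +
        word b u * TensorAlgebra.ι R ⁅b j, b k⁆ * word b m * commRel R (b p) (b q) * word b v) := by
    simp only [word_append, word_cons, commRel_apply]
    noncomm_ring
  have short_right (x : L) : word b u * commRel R (b j) (b k) *
      (word b m * TensorAlgebra.ι R x * word b v) ∈
        relBelow b (u ++ j :: k :: (m ++ p :: q :: v)) := by
    refine map_mem_of_forall_basis b (LinearMap.mulLeft R (word b u * commRel R (b j) (b k)) ∘ₗ
      LinearMap.mulRight R (word b v) ∘ₗ LinearMap.mulLeft R (word b m) ∘ₗ TensorAlgebra.ι R)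
      (fun i => ?_) x
    simpa [mul_assoc] using commRel_mem_relBelow_of_length_lt (b := b) (u := u) (v := m ++ i :: v)
      (l := u ++ j :: k :: (m ++ p :: q :: v)) (by simp; omega) (b j) (b k)
  have short_left (x : L) : word b u * TensorAlgebra.ι R x * word b m * commRel R (b p) (b q) *
      word b v ∈ relBelow b (u ++ j :: k :: (m ++ p :: q :: v)) := by
    refine map_mem_of_forall_basis b (LinearMap.mulRight R (word b v) ∘ₗ
      LinearMap.mulRight R (commRel R (b p) (b q)) ∘ₗ LinearMap.mulRight R (word b m) ∘ₗ
      LinearMap.mulLeft R (word b u) ∘ₗ TensorAlgebra.ι R) (fun i => ?_) x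
    simpa [mul_assoc] using commRel_mem_relBelow_of_length_lt (b := b) (u := u ++ i :: m) (v := v)
      (l := u ++ j :: k :: (m ++ p :: q :: v)) (by simp; omega) (b p) (b q)
  rw [expand]
  refine sub_mem (add_mem ?_ (short_right _)) (add_mem ?_ (short_left _))
  · refine word_mul_commRel_mul_word_mem_relBelow hkj ?_
    simpa using shortlex_append_cons_cons (u ++ j :: k :: m) (p :: v) v hqp (by simp)
  · refine word_mul_commRel_mul_word_mem_relBelow hqp ?_
    simpa using shortlex_append_cons_cons u (j :: m ++ p :: q :: v) (m ++ p :: q :: v) hkj (by simp)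

lemma relation_sub_relation_mem_relBelow {l : List I} (d e : Descent l) :
    d.relation b - e.relation b ∈ relBelow b l := by
  wlog hle : d.left.length ≤ e.left.length generalizing d e
  · rw [← neg_sub]
    exact neg_mem (this e d (le_of_not_ge hle))
  obtain ⟨u, j, k, v, hkj, rfl⟩ := d
  obtain ⟨u', p, q, v', hqp, eq⟩ := e
  obtain ⟨m, rfl⟩ : u <+: u' := List.prefix_of_prefix_length_le
    (List.prefix_append u (j :: k :: v)) (eq ▸ List.prefix_append u' (p :: q :: v')) hle
  simp only [List.append_assoc, List.append_cancel_left_eq] at eq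
  match m, eq with
  | [], eq =>
    obtain ⟨rfl, rfl, rfl⟩ : p = j ∧ q = k ∧ v' = v := by simpa using eq
    simp [Descent.relation]
  | [i], eq =>
    obtain ⟨rfl, rfl, rfl⟩ : i = j ∧ p = k ∧ q :: v' = v := by simpa using eq
    exact overlapping_descents_sub_mem_relBelow b u v' hkj hqp
  | i :: i' :: m, eq =>
    obtain ⟨rfl, rfl, rfl⟩ : i = j ∧ i' = k ∧ m ++ p :: q :: v' = v := by simpa using eq
    exact disjoint_descents_sub_mem_relBelow b u m v' hkj hqp

open Classical in
/-- The coordinates, on the weakly increasing words, of the result of rewriting `l` until no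
descent is left. A weakly increasing word is recorded as the multiset of its letters. -/
noncomputable def normalFormWord [WellFoundedLT I] (l : List I) : Multiset I →₀ R :=
  if h : Nonempty (Descent l) then
    normalFormWord (h.some.left ++ h.some.snd :: h.some.fst :: h.some.right) +
      Finsupp.linearCombination R
        (fun i => normalFormWord (h.some.left ++ i :: h.some.right))
        (b.repr ⁅b h.some.fst, b h.some.snd⁆)
  else Finsupp.single ↑l 1
termination_by (List.Shortlex.wf wellFounded_lt).wrap l
decreasing_by
  · exact h.some.shortlex_swap
  · exact h.some.shortlex_contract i

/-- The product in `U(L)` of the basis vectors indexed by a multiset, in increasing order. -/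
noncomputable def monomial (m : Multiset I) : UniversalEnvelopingAlgebra R L :=
  ((m.sort (· ≤ ·)).map fun i => ι R (b i)).prod

variable [WellFoundedLT I]

/-- The linear extension of `normalFormWord` to the tensor algebra. -/
noncomputable def normalForm : TensorAlgebra R L →ₗ[R] Multiset I →₀ R :=
  b.tensorAlgebra.constr R fun l => normalFormWord b l.toList

lemma normalForm_word (l : List I) : normalForm b (word b l) = normalFormWord b l := by
  rw [← FreeMonoid.toList_ofList l, ← tensorAlgebra_basis_apply, normalForm, Basis.constr_basis]

lemma normalForm_word_of_pairwise {l : List I} (hl : l.Pairwise (· ≤ ·)) :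
    normalForm b (word b l) = Finsupp.single (l : Multiset I) 1 := by
  rw [normalForm_word, normalFormWord, dif_neg (not_nonempty_iff.2 (isEmpty_descent_iff.2 hl))]

lemma normalForm_relation_some {l : List I} (h : Nonempty (Descent l)) :
    normalForm b (h.some.relation b) = 0 := by
  rw [Descent.relation_eq_sub, map_sub, map_add, Finsupp.apply_linearCombination, normalForm_word,
    normalForm_word, normalFormWord, dif_pos h]
  simp only [Function.comp_def, normalForm_word, sub_self]

lemma normalForm_relation {l : List I} (d : Descent l) : normalForm b (d.relation b) = 0 := by
  induction l using (List.Shortlex.wf (α := I) (r := (· < ·)) wellFounded_lt).induction with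
  | _ l ih =>
    have relBelow_le : relBelow b l ≤ LinearMap.ker (normalForm b) :=
      Submodule.span_le.2 fun t ⟨l', hl', d', hd'⟩ => hd' ▸ ih l' hl' d'
    have sub_mem_ker := relBelow_le (relation_sub_relation_mem_relBelow b d (Nonempty.some ⟨d⟩))
    rwa [LinearMap.mem_ker, map_sub, normalForm_relation_some, sub_zero] at sub_mem_ker

lemma normalForm_mul_commRel_mul (s t : TensorAlgebra R L) (x y : L) :
    normalForm b (s * commRel R x y * t) = 0 := by
  have words (u v : List I) : normalForm b (word b u * commRel R x y * word b v) = 0 := by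
    refine map_commRel_mem b (S := ⊥) (normalForm b ∘ₗ LinearMap.mulRight R (word b v) ∘ₗ
      LinearMap.mulLeft R (word b u)) (fun j k hkj => ?_) x y
    exact normalForm_relation b ⟨u, j, k, v, hkj, rfl⟩
  have words_left (u : List I) : normalForm b (word b u * commRel R x y * t) = 0 := by
    refine map_mem_of_forall_basis b.tensorAlgebra (S := ⊥) (normalForm b ∘ₗ
      LinearMap.mulLeft R (word b u * commRel R x y)) (fun l => ?_) t
    simpa [tensorAlgebra_basis_apply, mul_assoc] using words u l.toList
  rw [mul_assoc]
  refine map_mem_of_forall_basis b.tensorAlgebra (S := ⊥) (normalForm b ∘ₗ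
    LinearMap.mulRight R (commRel R x y * t)) (fun l => ?_) s
  simpa [tensorAlgebra_basis_apply, mul_assoc] using words_left l.toList

lemma normalForm_eq_zero_of_mkAlgHom_eq_zero {t : TensorAlgebra R L} (ht : mkAlgHom R L t = 0) :
    normalForm b t = 0 := by
  let K : RingCon (TensorAlgebra R L) :=
    { r := fun s t => ∀ u v, normalForm b (u * s * v) = normalForm b (u * t * v)
      iseqv := ⟨fun _ _ _ => rfl, fun h u v => (h u v).symm, fun h h' u v =>
        (h u v).trans (h' u v)⟩
      add' := fun h h' u v => by simp only [mul_add, add_mul, map_add, h u v, h' u v]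
      mul' := fun {s s' t t'} h h' u v => by
        have h := h u (t * v)
        have h' := h' (u * s') v
        simp only [mul_assoc] at h h' ⊢
        exact h.trans h' }
  have le_K : UniversalEnvelopingAlgebra.ringCon R L ≤ K := by
    rw [UniversalEnvelopingAlgebra.ringCon, RingCon.ringConGen_le]
    rintro _ _ ⟨x, y⟩ u v
    rw [← sub_eq_zero, ← map_sub, ← neg_eq_zero, ← map_neg, ← normalForm_mul_commRel_mul b u v x y,
      commRel_apply]
    congr 1
    noncomm_ring
  have rel : UniversalEnvelopingAlgebra.ringCon R L t 0 := (RingCon.eq _).1 ht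
  simpa using le_K rel 1 1

lemma linearIndependent_monomial : LinearIndependent R (monomial b) := by
  rw [linearIndependent_iff]
  intro c hc
  have normalForm_lift : normalForm b
      (Finsupp.linearCombination R (fun m : Multiset I => word b (m.sort (· ≤ ·))) c) = c := by
    rw [Finsupp.apply_linearCombination]
    simp [Function.comp_def, normalForm_word_of_pairwise, Finsupp.linearCombination_apply]
  rw [← normalForm_lift]
  apply normalForm_eq_zero_of_mkAlgHom_eq_zero
  rw [← AlgHom.toLinearMap_apply, Finsupp.apply_linearCombination, ← hc]
  simp only [Function.comp_def, AlgHom.toLinearMap_apply, mkAlgHom_word]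
  rfl

lemma mkAlgHom_word_mem_span_monomial (l : List I) :
    mkAlgHom R L (word b l) ∈ Submodule.span R (Set.range (monomial b)) := by
  induction l using (List.Shortlex.wf (α := I) (r := (· < ·)) wellFounded_lt).induction with
  | _ l ih =>
    rcases isEmpty_or_nonempty (Descent l) with hl | ⟨⟨d⟩⟩
    · refine Submodule.subset_span ⟨l, ?_⟩
      rw [mkAlgHom_word, monomial, Multiset.coe_sort,
        List.mergeSort_eq_self _ (isEmpty_descent_iff.1 hl)]
    · have relation_eq_zero : mkAlgHom R L (d.relation b) = 0 := by
        simp [Descent.relation, mkAlgHom_commRel]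
      rw [d.relation_eq_sub, map_sub, sub_eq_zero] at relation_eq_zero
      rw [relation_eq_zero, map_add, ← AlgHom.toLinearMap_apply _ (Finsupp.linearCombination _ _ _),
        Finsupp.apply_linearCombination, Finsupp.linearCombination_apply]
      exact add_mem (ih _ d.shortlex_swap) (Submodule.sum_mem _ fun i _ =>
        Submodule.smul_mem _ _ (ih _ (d.shortlex_contract i)))

lemma span_monomial : Submodule.span R (Set.range (monomial b)) = ⊤ := by
  refine eq_top_iff.2 fun a _ => ?_
  obtain ⟨t, rfl⟩ := mkAlgHom_surjective a
  refine map_mem_of_forall_basis b.tensorAlgebra (mkAlgHom R L).toLinearMap (fun l => ?_) t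
  simpa [tensorAlgebra_basis_apply] using mkAlgHom_word_mem_span_monomial b l.toList

/-- The **Poincaré–Birkhoff–Witt basis** of `U(L)`. -/
noncomputable def pbwBasis : Basis (Multiset I) R (UniversalEnvelopingAlgebra R L) :=
  Basis.mk (linearIndependent_monomial b) (span_monomial b).ge

lemma coe_pbwBasis : ⇑(pbwBasis b) = monomial b := Basis.coe_mk _ _

end

/-! ### Freeness over the enveloping algebra of a subalgebra -/

section

lemma sort_add {I : Type*} [LinearOrder I] {s t : Multiset I} (h : ∀ i ∈ s, ∀ j ∈ t, i ≤ j) :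
    (s + t).sort (· ≤ ·) = s.sort (· ≤ ·) ++ t.sort (· ≤ ·) := by
  refine List.Perm.eq_of_pairwise' (r := (· ≤ ·)) (Multiset.pairwise_sort _ _)
    (List.pairwise_append.2 ⟨Multiset.pairwise_sort _ _, Multiset.pairwise_sort _ _, ?_⟩) ?_
  · simpa using h
  · rw [← Multiset.coe_eq_coe, ← Multiset.coe_add]
    simp only [Multiset.sort_eq]

lemma multiset_filterMap_none {α β : Type*} (s : Multiset α) :
    s.filterMap (fun _ => (none : Option β)) = 0 := by
  induction s using Multiset.induction <;> simp_all

/-- A multiset on a disjoint union is a multiset on each part. The part on `K` comes first, since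
the monomials in `K` form a basis over the algebra spanned by the monomials in `I`. -/
def disjSumEquiv (I K : Type*) : (Σ _ : Multiset K, Multiset I) ≃ Multiset (I ⊕ K) where
  toFun p := p.2.disjSum p.1
  invFun s := ⟨s.filterMap Sum.getRight?, s.filterMap Sum.getLeft?⟩
  left_inv p := by
    simp [Multiset.disjSum, Multiset.filterMap_add, Multiset.filterMap_map, Function.comp_def,
      multiset_filterMap_none]
  right_inv s := by
    induction s using Multiset.induction with
    | empty => rfl
    | cons i s ih => cases i <;> simpa [Multiset.filterMap_cons, Multiset.disjSum] using ih

instance {I K : Type*} [LinearOrder I] [LinearOrder K] [WellFoundedLT I] [WellFoundedLT K] :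
    WellFoundedLT (I ⊕ₗ K) :=
  ⟨Sum.lex_wf wellFounded_lt wellFounded_lt⟩

variable {R L L' : Type*} [CommRing R] [LieRing L] [LieAlgebra R L] [LieRing L'] [LieAlgebra R L']

/-- The algebra homomorphism between universal enveloping algebras induced by a homomorphism of
Lie algebras. -/
noncomputable def map (g : L' →ₗ⁅R⁆ L) :
    UniversalEnvelopingAlgebra R L' →ₐ[R] UniversalEnvelopingAlgebra R L :=
  lift R ((ι R (L := L)).comp g)

@[simp]
lemma map_ι (g : L' →ₗ⁅R⁆ L) (x : L') : map g (ι R x) = ι R (g x) :=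
  lift_ι_apply R ((ι R (L := L)).comp g) x

lemma monomial_add {I : Type*} [LinearOrder I] (b : Basis I R L) {s t : Multiset I}
    (h : ∀ i ∈ s, ∀ j ∈ t, i ≤ j) : monomial b (s + t) = monomial b s * monomial b t := by
  rw [monomial, sort_add h, List.map_append, List.prod_append, ← monomial, ← monomial]

lemma monomial_map {I I' : Type*} [LinearOrder I] [LinearOrder I'] (b : Basis I R L)
    (b' : Basis I' R L') (g : L' →ₗ⁅R⁆ L) {f : I' → I} (hf : StrictMono f)
    (hg : ∀ i, g (b' i) = b (f i)) (s : Multiset I') :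
    monomial b (s.map f) = map g (monomial b' s) := by
  rw [monomial, ← Multiset.map_sort f s (· ≤ ·) (· ≤ ·) (by simp [hf.le_iff_le]), monomial,
    map_list_prod]
  simp only [List.map_map, Function.comp_def, map_ι, hg]

lemma free_of_forall_smul_eq {B A S K M : Type*} [Ring B] [Algebra R B] [AddCommGroup A]
    [Module R A] [Module B A] [IsScalarTower R B A] (bB : Basis K R B) (bA : Basis M R A)
    (e : (Σ _ : S, K) ≃ M) (c : S → A) (h : ∀ s k, bB k • c s = bA (e ⟨s, k⟩)) :
    Module.Free B A := by
  have eq_equiv : (Finsupp.linearCombination B c).restrictScalars R =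
      ((Finsupp.basis fun _ : S => bB).equiv bA e).toLinearMap := by
    refine (Finsupp.basis fun _ : S => bB).ext fun ⟨s, k⟩ => ?_
    rw [LinearEquiv.coe_coe, Basis.equiv_apply, ← h]
    simp
  have bijective : Function.Bijective (Finsupp.linearCombination B c) := by
    have := ((Finsupp.basis fun _ : S => bB).equiv bA e).bijective
    rwa [← LinearEquiv.coe_coe, ← eq_equiv] at this
  exact .of_equiv (LinearEquiv.ofBijective _ bijective)

lemma isScalarTower_toModule {B A : Type*} [Ring B] [Algebra R B] [Ring A] [Algebra R A]
    (f : B →ₐ[R] A) :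
    letI := f.toRingHom.toModule
    IsScalarTower R B A := by
  let := f.toRingHom.toModule
  refine ⟨fun r x a => ?_⟩
  change f (r • x) * a = r • (f x * a)
  rw [map_smul, smul_mul_assoc]

lemma free_map_of_basis {I K : Type*} [LinearOrder I] [LinearOrder K] [WellFoundedLT I]
    [WellFoundedLT K] (g : L' →ₗ⁅R⁆ L) (b' : Basis I R L') (b : Basis (I ⊕ₗ K) R L)
    (hb : ∀ i, g (b' i) = b (toLex (.inl i))) :
    letI := (map g).toRingHom.toModule
    Module.Free (UniversalEnvelopingAlgebra R L') (UniversalEnvelopingAlgebra R L) := by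
  let := (map g).toRingHom.toModule
  have := isScalarTower_toModule (map g)
  refine free_of_forall_smul_eq (pbwBasis b') (pbwBasis b) (disjSumEquiv I K)
    (fun t => monomial b (t.map fun k => toLex (.inr k))) fun t s => ?_
  have ordered : ∀ i ∈ s.map fun i => toLex (Sum.inl i),
      ∀ k ∈ t.map fun k => (toLex (.inr k) : I ⊕ₗ K), i ≤ k := by
    simp
  rw [coe_pbwBasis, coe_pbwBasis, RingHom.toModule_smul]
  exact congrArg (· * _) (monomial_map b b' g Sum.Lex.inl_strictMono hb s).symm |>.trans
    (monomial_add b ordered).symm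

lemma free_map (g : L' →ₗ⁅R⁆ L) (hg : Function.Injective g) [Module.Free R L']
    [Module.Free R (L ⧸ LinearMap.range (g : L' →ₗ[R] L))] :
    letI := (map g).toRingHom.toModule
    Module.Free (UniversalEnvelopingAlgebra R L') (UniversalEnvelopingAlgebra R L) := by
  obtain ⟨_, _⟩ := exists_wellFoundedLT (Module.Free.ChooseBasisIndex R L')
  obtain ⟨_, _⟩ := exists_wellFoundedLT (Module.Free.ChooseBasisIndex R
    (L ⧸ LinearMap.range (g : L' →ₗ[R] L)))
  let b' := Module.Free.chooseBasis R L'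
  refine free_map_of_basis g b' ((Basis.sumQuot (b'.map (LinearEquiv.ofInjective _ hg))
    (Module.Free.chooseBasis R _)).reindex toLex) fun i => ?_
  simp

end

/-! ### Right independence of free generators -/

section

open MulOpposite

lemma linearIndependent_op_smul_one {A B X : Type*} [Ring A] [Ring B] [Module B A]
    [IsScalarTower B A A] [Module.Free B A] {x : X → B} (hx : LinearIndependent Bᵐᵒᵖ x) :
    LinearIndependent Aᵐᵒᵖ fun i => x i • (1 : A) := by
  rw [linearIndependent_iff'] at hx ⊢
  intro t c hc i hi
  let β := Module.Free.chooseBasis B A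
  have coord_eq_zero (s) : β.repr (unop (c i)) s = 0 := by
    have coord_sum := congr(β.repr $hc s)
    simp only [smul_eq_mul_unop, smul_mul_assoc, one_mul, map_sum, map_smul, map_zero,
      Finsupp.finsetSum_apply, Finsupp.smul_apply, Finsupp.zero_apply, smul_eq_mul] at coord_sum
    exact op_injective (hx t (fun j => op (β.repr (unop (c j)) s)) coord_sum i hi)
  exact unop_injective (β.ext_elem fun s => by rw [coord_eq_zero, unop_zero, map_zero]; rfl)

lemma linearIndependent_freeAlgebra_ι (R X : Type*) [CommRing R] :
    LinearIndependent (FreeAlgebra R X)ᵐᵒᵖ (FreeAlgebra.ι R : X → FreeAlgebra R X) := by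
  rw [linearIndependent_iff']
  intro t c hc i hi
  let e := FreeAlgebra.equivMonoidAlgebraFreeMonoid (R := R) (X := X)
  have e_ι (j : X) : e (FreeAlgebra.ι R j) = MonoidAlgebra.single (FreeMonoid.of j) 1 := by
    simp [e, FreeAlgebra.equivMonoidAlgebraFreeMonoid]
  suffices e (unop (c i)) = 0 by simpa using this
  ext m
  have coeff_eq_zero := congr((e $hc).coeff (FreeMonoid.of i * m))
  simp only [smul_eq_mul_unop, map_sum, map_mul, e_ι, map_zero, MonoidAlgebra.coeff_sum,
    MonoidAlgebra.coeff_zero, Finsupp.finsetSum_apply, Finsupp.zero_apply] at coeff_eq_zero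
  rwa [Finset.sum_eq_single_of_mem i hi fun j _ hji =>
    MonoidAlgebra.coeff_single_mul_of_forall_mul_ne _ _ fun m' h =>
      hji (by simpa using congr(($h).toList.head?)),
    MonoidAlgebra.coeff_single_mul_eq_mul_coeff m (by simp), one_mul] at coeff_eq_zero

lemma linearIndependent_ι_freeLieAlgebra (R X : Type*) [CommRing R] :
    LinearIndependent (UniversalEnvelopingAlgebra R (FreeLieAlgebra R X))ᵐᵒᵖ
      fun i : X => ι R (FreeLieAlgebra.of R i) := by
  rw [linearIndependent_iff']
  intro t c hc i hi
  let e := FreeLieAlgebra.universalEnvelopingEquivFreeAlgebra R X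
  have e_ι (j : X) : e (ι R (FreeLieAlgebra.of R j)) = FreeAlgebra.ι R j := by simp [e]
  have e_sum := congr(e $hc)
  simp only [smul_eq_mul_unop, map_sum, map_mul, e_ι, map_zero] at e_sum
  have e_eq_zero := linearIndependent_iff'.1 (linearIndependent_freeAlgebra_ι R X) t
    (fun j => op (e (unop (c j)))) e_sum i hi
  simpa using e_eq_zero

variable {R L X : Type*} [CommRing R] [LieRing L] [LieAlgebra R L]

lemma linearIndependent_ι_of_injective_lift (v : X → L)
    (hinj : Function.Injective (FreeLieAlgebra.lift R v)) [Module.Free R (FreeLieAlgebra R X)]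
    [Module.Free R (L ⧸ LinearMap.range (FreeLieAlgebra.lift R v : FreeLieAlgebra R X →ₗ[R] L))] :
    LinearIndependent (UniversalEnvelopingAlgebra R L)ᵐᵒᵖ fun i => ι R (v i) := by
  let := (map (FreeLieAlgebra.lift R v)).toRingHom.toModule
  have : IsScalarTower (UniversalEnvelopingAlgebra R (FreeLieAlgebra R X))
      (UniversalEnvelopingAlgebra R L) (UniversalEnvelopingAlgebra R L) :=
    ⟨fun x a c => mul_assoc _ a c⟩
  have := free_map (FreeLieAlgebra.lift R v) hinj
  convert linearIndependent_op_smul_one (A := UniversalEnvelopingAlgebra R L)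
    (linearIndependent_ι_freeLieAlgebra R X) with i
  rw [RingHom.toModule_smul, mul_one]
  simp [-ι_apply]

variable (R L) in
/-- The principal anti-automorphism of `U(L)`, which sends `ι x` to `-ι x`. -/
noncomputable def antipode :
    UniversalEnvelopingAlgebra R L →ₐ[R] (UniversalEnvelopingAlgebra R L)ᵐᵒᵖ :=
  lift R
    { (opLinearEquiv R).toLinearMap ∘ₗ (-(ι R (L := L) : L →ₗ[R] _)) with
      map_lie' := fun {x y} => unop_injective (by
        simp [LieRing.of_associative_ring_bracket, -ι_apply]) }

@[simp]
lemma antipode_ι (x : L) : antipode R L (ι R x) = op (-ι R x) := lift_ι_apply R _ x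

@[simp]
lemma unop_antipode_unop_antipode (a : UniversalEnvelopingAlgebra R L) :
    unop (antipode R L (unop (antipode R L a))) = a := by
  have opComm_comp : (AlgHom.opComm (antipode R L)).comp (antipode R L) = .id R _ := by
    ext x
    simp [-ι_apply]
  exact DFunLike.congr_fun opComm_comp a

lemma unop_antipode_linearCombination (v : X → L) (c : X →₀ UniversalEnvelopingAlgebra R L) :
    unop (antipode R L (Finsupp.linearCombination (UniversalEnvelopingAlgebra R L)
      (fun i => ι R (v i)) c)) =
    -Finsupp.linearCombination (UniversalEnvelopingAlgebra R L)ᵐᵒᵖ (fun i => ι R (v i))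
      (c.mapRange (antipode R L) (map_zero _)) := by
  induction c using Finsupp.induction_linear with
  | zero => simp
  | add c d hc hd =>
    rw [Finsupp.mapRange_add (map_add _), map_add, map_add, map_add, unop_add, hc, hd, neg_add]
  | single i a => simp [-ι_apply, smul_eq_mul_unop]

lemma linearIndependent_ι_of_op {v : X → L}
    (h : LinearIndependent (UniversalEnvelopingAlgebra R L)ᵐᵒᵖ fun i => ι R (v i)) :
    LinearIndependent (UniversalEnvelopingAlgebra R L) fun i => ι R (v i) := by
  rw [linearIndependent_iff] at h ⊢
  intro c hc
  have antipode_eq_zero := h _ (neg_eq_zero.1 ((unop_antipode_linearCombination v c).symm.trans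
    (by rw [hc, map_zero, unop_zero])))
  ext i
  have := congr(unop (antipode R L (unop ($antipode_eq_zero i))))
  simpa using this

end

/-! ### The ideal generated by a Lie ideal -/

section

open MulOpposite

variable {R L X : Type*} [CommRing R] [LieRing L] [LieAlgebra R L]

variable (R L) in
lemma adjoin_range_ι : Algebra.adjoin R (Set.range (ι R (L := L))) = ⊤ := by
  rw [← (AlgHom.range_eq_top _).2 mkAlgHom_surjective, ← Algebra.map_top,
    ← TensorAlgebra.adjoin_range_ι, AlgHom.map_adjoin, ← Set.range_comp]
  rfl

lemma ι_mem_span_of_mem_lieSpan {s : Set L} {x : L} (hx : x ∈ LieSubalgebra.lieSpan R L s) :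
    ι R x ∈ Submodule.span (UniversalEnvelopingAlgebra R L) (ι R '' s) := by
  induction hx using LieSubalgebra.lieSpan_induction with
  | mem x hx => exact Submodule.subset_span ⟨x, hx, rfl⟩
  | zero => simp
  | add x y _ _ hx hy => rw [map_add]; exact add_mem hx hy
  | smul r x _ hx =>
    rw [map_smul, Algebra.smul_def]
    exact Submodule.smul_mem _ (algebraMap R (UniversalEnvelopingAlgebra R L) r) hx
  | lie x y _ _ hx hy =>
    rw [LieHom.map_lie, LieRing.of_associative_ring_bracket]
    exact sub_mem (Submodule.smul_mem _ _ hy) (Submodule.smul_mem _ _ hx)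

variable {J : LieIdeal R L}

lemma mul_ι_mem_span {s : Set L} (hs : LieSubalgebra.lieSpan R L s = J.toLieSubalgebra)
    {a : UniversalEnvelopingAlgebra R L}
    (ha : a ∈ Submodule.span (UniversalEnvelopingAlgebra R L) (ι R '' s)) (x : L) :
    a * ι R x ∈ Submodule.span (UniversalEnvelopingAlgebra R L) (ι R '' s) := by
  induction ha using Submodule.span_induction with
  | zero => simp
  | add a c _ _ ha hc => rw [add_mul]; exact add_mem ha hc
  | smul r a _ ha => rw [smul_eq_mul, mul_assoc]; exact Submodule.smul_mem _ _ ha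
  | mem a ha =>
    obtain ⟨y, hy, rfl⟩ := ha
    have mul_comm_lie : ι R y * ι R x = ι R x * ι R y + ι R ⁅y, x⁆ := by
      rw [LieHom.map_lie, LieRing.of_associative_ring_bracket, add_sub_cancel]
    have lie_mem : ⁅y, x⁆ ∈ LieSubalgebra.lieSpan R L s :=
      hs.ge (lie_mem_left R L J y x (hs.le (LieSubalgebra.subset_lieSpan hy)))
    rw [mul_comm_lie]
    exact add_mem (Submodule.smul_mem _ _ (Submodule.subset_span ⟨y, hy, rfl⟩))
      (ι_mem_span_of_mem_lieSpan lie_mem)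

lemma mul_mem_span {s : Set L} (hs : LieSubalgebra.lieSpan R L s = J.toLieSubalgebra)
    {a : UniversalEnvelopingAlgebra R L}
    (ha : a ∈ Submodule.span (UniversalEnvelopingAlgebra R L) (ι R '' s))
    (c : UniversalEnvelopingAlgebra R L) :
    a * c ∈ Submodule.span (UniversalEnvelopingAlgebra R L) (ι R '' s) := by
  have hc : c ∈ Algebra.adjoin R (Set.range (ι R (L := L))) := adjoin_range_ι R L ▸ trivial
  induction hc using Algebra.adjoin_induction generalizing a with
  | mem x hx =>
    obtain ⟨x, rfl⟩ := hx
    exact mul_ι_mem_span hs ha x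
  | algebraMap r => rw [← Algebra.commutes]; exact Submodule.smul_mem _ _ ha
  | add x y _ _ hx hy => rw [mul_add]; exact add_mem (hx ha) (hy ha)
  | mul x y _ _ hx hy => rw [← mul_assoc]; exact hy (hx ha)

lemma mem_span_of_mem_twoSidedIdeal_span {s : Set L}
    (hs : LieSubalgebra.lieSpan R L s = J.toLieSubalgebra) {a : UniversalEnvelopingAlgebra R L}
    (ha : a ∈ TwoSidedIdeal.span (ι R '' (J : Set L))) :
    a ∈ Submodule.span (UniversalEnvelopingAlgebra R L) (ι R '' s) := by
  let K := Submodule.span (UniversalEnvelopingAlgebra R L) (ι R '' s)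
  let T : TwoSidedIdeal (UniversalEnvelopingAlgebra R L) :=
    .mk' K K.zero_mem K.add_mem K.neg_mem (K.smul_mem _) (mul_mem_span hs · _)
  have mem_T (c) : c ∈ T ↔ c ∈ K := by simp [T, TwoSidedIdeal.mem_mk']
  refine (mem_T a).1 (TwoSidedIdeal.mem_span_iff.1 ha T ?_)
  rintro _ ⟨x, hx, rfl⟩
  exact (mem_T _).2 (ι_mem_span_of_mem_lieSpan (hs ▸ hx))

lemma range_linearCombination_ι {v : X → L}
    (hv : LieSubalgebra.lieSpan R L (Set.range v) = J.toLieSubalgebra) :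
    Set.range (Finsupp.linearCombination (UniversalEnvelopingAlgebra R L) fun i => ι R (v i)) =
      (TwoSidedIdeal.span (ι R '' (J : Set L)) : Set (UniversalEnvelopingAlgebra R L)) := by
  refine Set.Subset.antisymm ?_ fun a ha => ?_
  · rintro _ ⟨c, rfl⟩
    refine sum_mem fun i _ => TwoSidedIdeal.mul_mem_left _ _ _
      (TwoSidedIdeal.subset_span ⟨_, ?_, rfl⟩)
    exact hv.le (LieSubalgebra.subset_lieSpan ⟨i, rfl⟩)
  · rw [← LinearMap.coe_range, Finsupp.range_linearCombination]
    simpa only [← Set.range_comp] using! mem_span_of_mem_twoSidedIdeal_span hv ha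

lemma range_linearCombination_op_ι {v : X → L}
    (hv : LieSubalgebra.lieSpan R L (Set.range v) = J.toLieSubalgebra) :
    Set.range (Finsupp.linearCombination (UniversalEnvelopingAlgebra R L)ᵐᵒᵖ fun i => ι R (v i)) =
      (TwoSidedIdeal.span (ι R '' (J : Set L)) : Set (UniversalEnvelopingAlgebra R L)) := by
  have subset : Set.range (Finsupp.linearCombination (UniversalEnvelopingAlgebra R L)ᵐᵒᵖ
      fun i => ι R (v i)) ⊆ TwoSidedIdeal.span (ι R '' (J : Set L)) := by
    rintro _ ⟨c, rfl⟩
    refine sum_mem fun i _ => TwoSidedIdeal.mul_mem_right _ _ _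
      (TwoSidedIdeal.subset_span ⟨_, ?_, rfl⟩)
    exact hv.le (LieSubalgebra.subset_lieSpan ⟨i, rfl⟩)
  have antipode_mem {a : UniversalEnvelopingAlgebra R L}
      (ha : a ∈ TwoSidedIdeal.span (ι R '' (J : Set L))) : unop (antipode R L a) ∈
        Set.range (Finsupp.linearCombination (UniversalEnvelopingAlgebra R L)ᵐᵒᵖ
          fun i => ι R (v i)) := by
    obtain ⟨c, rfl⟩ := (range_linearCombination_ι hv).ge ha
    exact ⟨-_, (map_neg _ _).trans (unop_antipode_linearCombination v c).symm⟩
  refine subset.antisymm fun a ha => ?_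
  rw [← unop_antipode_unop_antipode a]
  exact antipode_mem (subset (antipode_mem ha))

lemma lieSpan_range_eq_range_lift (v : X → L) :
    LieSubalgebra.lieSpan R L (Set.range v) = (FreeLieAlgebra.lift R v).range := by
  refine le_antisymm (LieSubalgebra.lieSpan_le.2 ?_) ?_
  · rintro _ ⟨i, rfl⟩
    exact ⟨FreeLieAlgebra.of R i, FreeLieAlgebra.lift_of_apply v i⟩
  · let K := LieSubalgebra.lieSpan R L (Set.range v)
    let v' : X → K := fun i => ⟨v i, LieSubalgebra.subset_lieSpan ⟨i, rfl⟩⟩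
    have lift_eq : FreeLieAlgebra.lift R v = K.incl.comp (FreeLieAlgebra.lift R v') := by
      ext i
      simp [v']
    rintro _ ⟨x, rfl⟩
    rw [lift_eq]
    exact (FreeLieAlgebra.lift R v' x).2

end

end PoincareBirkhoffWitt

open PoincareBirkhoffWitt in
theorem stmt_3_general {R L X : Type*} [CommRing R] [LieRing L] [LieAlgebra R L]
    (J : LieIdeal R L) [Module.Free R J] [Module.Free R (L ⧸ J)] (v : X → L)
    (hinj : Function.Injective (FreeLieAlgebra.lift R v))
    (hrange : ∀ x : L, x ∈ (FreeLieAlgebra.lift R v).range ↔ x ∈ J) :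
    Function.Injective
        (Finsupp.linearCombination (UniversalEnvelopingAlgebra R L) fun i => ι R (v i)) ∧
    Set.range (Finsupp.linearCombination (UniversalEnvelopingAlgebra R L) fun i => ι R (v i)) =
      (TwoSidedIdeal.span (ι R '' (J : Set L)) : Set (UniversalEnvelopingAlgebra R L)) ∧
    Function.Injective
        (Finsupp.linearCombination (UniversalEnvelopingAlgebra R L)ᵐᵒᵖ fun i => ι R (v i)) ∧
    Set.range (Finsupp.linearCombination (UniversalEnvelopingAlgebra R L)ᵐᵒᵖ fun i => ι R (v i)) =
      (TwoSidedIdeal.span (ι R '' (J : Set L)) : Set (UniversalEnvelopingAlgebra R L)) := by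
  have range_eq : (FreeLieAlgebra.lift R v).range = J.toLieSubalgebra :=
    LieSubalgebra.ext _ _ hrange
  have lieSpan_eq := (lieSpan_range_eq_range_lift v).trans range_eq
  have range_toLinearMap : LinearMap.range (FreeLieAlgebra.lift R v : FreeLieAlgebra R X →ₗ[R] L) =
      J.toSubmodule := congrArg LieSubalgebra.toSubmodule range_eq
  have : Module.Free R (FreeLieAlgebra R X) :=
    .of_equiv ((LinearEquiv.ofInjective _ hinj).trans (.ofEq _ _ range_toLinearMap)).symm
  have : Module.Free R
      (L ⧸ LinearMap.range (FreeLieAlgebra.lift R v : FreeLieAlgebra R X →ₗ[R] L)) :=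
    .of_equiv (Submodule.quotEquivOfEq _ _ range_toLinearMap).symm
  have right_independent := linearIndependent_ι_of_injective_lift v hinj
  exact ⟨linearIndependent_ι_of_op right_independent, range_linearCombination_ι lieSpan_eq,
    right_independent, range_linearCombination_op_ι lieSpan_eq⟩

open UniversalEnvelopingAlgebra in
/-- **If a Lie ideal `J ⊆ L` is a free Lie algebra on `W`, then the two-sided ideal `(J)` of
`U(L)` is a free left (and right) `U(L)`-module on `ι(W)`.**
Over a field `F`, let `J` be a Lie ideal of a Lie algebra `L` and `W ⊆ J` a subset generating
`J` as a Lie subalgebra, such that the canonical map `FreeLie_F(W) → L` is injective with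
range `J`.  Let `A = U(L)`, `ι : L → A`, and let `I` be the two-sided ideal of `A` generated
by `ι(J)`.  Then the left-multiplication map `⊕_{w ∈ W} A → A`, `(a_w) ↦ Σ a_w * ι(w)`, is an
injective left `A`-module map with image `I`, and the right-multiplication map
`(a_w) ↦ Σ ι(w) * a_w` (an `Aᵐᵒᵖ`-linear, i.e. right `A`-module, map) is injective with
image `I`. -/
theorem stmt_3 (F : Type*) [Field F] (L : Type*) [LieRing L] [LieAlgebra F L]
    (J : LieIdeal F L) (W : Set L)
    (hWJ : W ⊆ (J : Set L))
    (hgen : (J : Set L) ⊆ (LieSubalgebra.lieSpan F L W : Set L))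
    (hinj : Function.Injective ((FreeLieAlgebra.lift F) fun w : W => (w : L)))
    (hrange : ∀ x : L, x ∈ ((FreeLieAlgebra.lift F) fun w : W => (w : L)).range ↔ x ∈ J) :
    Function.Injective
        (Finsupp.linearCombination (UniversalEnvelopingAlgebra F L)
          fun w : W => ι F (w : L)) ∧
    Set.range
        ⇑(Finsupp.linearCombination (UniversalEnvelopingAlgebra F L)
          fun w : W => ι F (w : L)) =
      ((TwoSidedIdeal.span (⇑(ι F (L := L)) '' (J : Set L))) :
        Set (UniversalEnvelopingAlgebra F L)) ∧
    Function.Injective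
        (Finsupp.linearCombination (UniversalEnvelopingAlgebra F L)ᵐᵒᵖ
          fun w : W => ι F (w : L)) ∧
    Set.range
        ⇑(Finsupp.linearCombination (UniversalEnvelopingAlgebra F L)ᵐᵒᵖ
          fun w : W => ι F (w : L)) =
      ((TwoSidedIdeal.span (⇑(ι F (L := L)) '' (J : Set L))) :
        Set (UniversalEnvelopingAlgebra F L)) := by
  exact stmt_3_general J (fun w : W => (w : L)) hinj hrange
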